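/- (Theorem 2) Let n ∈ Im(Ca') with g(n,n) = 1 (a point of S^{2,4}), and let X, Y ∈ Im(Ca') with g(X,n) = g(Y,n) = 0 (tangent vectors at n). Define J Z := n×Z and (∇_A J)B := A×B − g(A×B, n)·n. Then the Nijenhuis tensor of the Cayley almost complex structure J, given by N(X,Y) = 2·((∇_{JX} J)Y − (∇_{JY} J)X + J((∇_Y J)X) − J((∇_X J)Y)), satisfies N(X,Y) = −8·n×(X×Y) = −8·J(X×Y). In particular the Cayley almost complex structure on S^{2,4} is non-integrable. -/

import Mathlib

-- The split octonion algebra Ca' as pairs of real quaternions.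
noncomputable section

abbrev Ca : Type := Quaternion ℝ × Quaternion ℝ

namespace Ca

/-- Split octonion multiplication: (a,b)·(c,d) = (ac + (conj d)b, da + b(conj c)). -/
def mul (x y : Ca) : Ca :=
  (x.1 * y.1 + star y.2 * x.2, y.2 * x.1 + x.2 * star y.1)

/-- The unit (1,0). -/
def one : Ca := (1, 0)

/-- Conjugation conj(a,b) = (conj a, −b). -/
def conj (x : Ca) : Ca := (star x.1, -x.2)

/-- Real part Re(a,b) = re a. -/
def re (x : Ca) : ℝ := x.1.re

/-- Norm form N(a,b) = ‖a‖² − ‖b‖², of signature (4,4). -/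
def N (x : Ca) : ℝ := Quaternion.normSq x.1 - Quaternion.normSq x.2

/-- The symmetric bilinear form ⟨x,y⟩ = (N(x+y) − N(x) − N(y))/2. -/
def bil (x y : Ca) : ℝ := (N (x + y) - N x - N y) / 2

/-- The vector cross product on Im(Ca'): X × Y := X·Y + g(X,Y)·1. -/
def cross (X Y : Ca) : Ca := mul X Y + bil X Y • one

end Ca

/-- The covariant derivative of the Cayley almost complex structure on S^{2,4}:
(∇_A J)B = A×B − g(A×B,n)·n. -/
def nablaJ (n A B : Ca) : Ca := Ca.cross A B - Ca.bil (Ca.cross A B) n • n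

/-- The Cayley almost complex structure J X = n×X. -/
def Jmap (n X : Ca) : Ca := Ca.cross n X

theorem Ca.bil_eq (x y : Ca) : Ca.bil x y =
    x.1.re * y.1.re + x.1.imI * y.1.imI + x.1.imJ * y.1.imJ + x.1.imK * y.1.imK
    - (x.2.re * y.2.re + x.2.imI * y.2.imI + x.2.imJ * y.2.imJ + x.2.imK * y.2.imK) := by
  simp only [Ca.bil, Ca.N, Quaternion.normSq_def', Prod.fst_add, Prod.snd_add,
    Quaternion.re_add, Quaternion.imI_add, Quaternion.imJ_add, Quaternion.imK_add]
  ring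

theorem Ca.bil_add_left (x y z : Ca) : Ca.bil (x + y) z = Ca.bil x z + Ca.bil y z := by
  simp [Ca.bil_eq]; ring

theorem Ca.bil_smul_left (c : ℝ) (x z : Ca) : Ca.bil (c • x) z = c * Ca.bil x z := by
  simp [Ca.bil_eq]; ring

theorem Ca.re_cross (A B : Ca) (hA : A.1.re = 0) (hB : B.1.re = 0) :
    (Ca.cross A B).1.re = 0 := by
  simp [Ca.cross, Ca.mul, Ca.one, Quaternion.re_one, Quaternion.imI_one, Quaternion.imJ_one,
    Quaternion.imK_one, Ca.bil_eq, hA, hB]; ring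

theorem Ca.cross_comm (A B : Ca) (hA : A.1.re = 0) (hB : B.1.re = 0) :
    Ca.cross A B = (-1 : ℝ) • Ca.cross B A := by
  ext <;> simp [Ca.cross, Ca.mul, Ca.one, Quaternion.re_one, Quaternion.imI_one, Quaternion.imJ_one,
    Quaternion.imK_one, Ca.bil_eq, hA, hB] <;> ring

theorem Ca.bil_cross_self (n Z : Ca) (hn : n.1.re = 0) (hZ : Z.1.re = 0) :
    Ca.bil (Ca.cross n Z) n = 0 := by
  simp [Ca.cross, Ca.mul, Ca.one, Quaternion.re_one, Quaternion.imI_one, Quaternion.imJ_one,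
    Quaternion.imK_one, Ca.bil_eq, hn, hZ]; ring

theorem Ca.cross_sub_smul (n Z : Ca) (c : ℝ) (hn : n.1.re = 0) :
    Ca.cross n (Z - c • n) = Ca.cross n Z := by
  ext <;> simp [Ca.cross, Ca.mul, Ca.one, Quaternion.re_one, Quaternion.imI_one, Quaternion.imJ_one,
    Quaternion.imK_one, Ca.bil_eq, hn] <;> ring

theorem Ca.cross_smul (n Z : Ca) (c : ℝ) :
    Ca.cross n (c • Z) = c • Ca.cross n Z := by
  ext <;> simp [Ca.cross, Ca.mul, Ca.one, Quaternion.re_one, Quaternion.imI_one, Quaternion.imJ_one,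
    Quaternion.imK_one, Ca.bil_eq] <;> ring

set_option maxHeartbeats 4000000 in
theorem Ca.cross_cross (A B C : Ca) (hA : A.1.re = 0) (hB : B.1.re = 0) (hC : C.1.re = 0) :
    Ca.cross (Ca.cross A B) C = (-1 : ℝ) • Ca.cross A (Ca.cross B C)
      + ((2 * Ca.bil C A) • B + ((-Ca.bil B A) • C + (-Ca.bil B C) • A)) := by
  ext <;> simp [Ca.cross, Ca.mul, Ca.one, Quaternion.re_one, Quaternion.imI_one, Quaternion.imJ_one,
    Quaternion.imK_one, Ca.bil_eq, hA, hB, hC] <;> ring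

theorem nablaJ_Jmap (n X Y : Ca) (hn : n.1.re = 0) (hnn : Ca.bil n n = 1)
    (hX : X.1.re = 0) (hY : Y.1.re = 0)
    (hXn : Ca.bil X n = 0) (hYn : Ca.bil Y n = 0) :
    nablaJ n (Jmap n X) Y = (-1 : ℝ) • Ca.cross n (Ca.cross X Y) := by
  have h := Ca.bil_cross_self n _ hn (Ca.re_cross X Y hX hY)
  simp only [nablaJ, Jmap, Ca.cross_cross n X Y hn hX hY, Ca.bil_add_left, Ca.bil_smul_left,
    h, hXn, hYn, hnn]
  module

/-- Theorem 2: the Nijenhuis tensor of the Cayley almost complex structure J on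
S^{2,4} satisfies N(X,Y) = −8·n×(X×Y) = −8·J(X×Y); in particular it is nonzero
whenever X×Y ≠ 0, so J is non-integrable. -/
theorem nijenhuis_J (n X Y : Ca) (hn : Ca.re n = 0) (hnn : Ca.bil n n = 1)
    (hX : Ca.re X = 0) (hY : Ca.re Y = 0)
    (hXn : Ca.bil X n = 0) (hYn : Ca.bil Y n = 0) :
    (2 : ℝ) • (nablaJ n (Jmap n X) Y - nablaJ n (Jmap n Y) X
        + Jmap n (nablaJ n Y X) - Jmap n (nablaJ n X Y)) =
      (-8 : ℝ) • Ca.cross n (Ca.cross X Y) ∧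
    (-8 : ℝ) • Ca.cross n (Ca.cross X Y) = (-8 : ℝ) • Jmap n (Ca.cross X Y) := by
  refine ⟨?_, rfl⟩
  have hn' : n.1.re = 0 := hn
  have hX' : X.1.re = 0 := hX
  have hY' : Y.1.re = 0 := hY
  rw [nablaJ_Jmap n X Y hn' hnn hX' hY' hXn hYn, nablaJ_Jmap n Y X hn' hnn hY' hX' hYn hXn]
  simp only [nablaJ, Jmap, Ca.cross_sub_smul _ _ _ hn']
  rw [Ca.cross_comm Y X hY' hX', Ca.cross_smul]
  module
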